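/- Let G = ∑_{n=0}^∞ (−1)^n/(2n+1)² be Catalan's constant. Then G = (1/64) ∑_{n=1}^∞ (−1)^{n−1} 256^n (40n² − 24n + 3) / (C(4n, 2n)² C(2n, n) n³ (2n−1)). -/

import Mathlib

/-!
The proof is by the Wilf–Zeilberger method, for the more general series
`∑ₖ (-1)ᵏ / (x + k)²` with `x > 0`; Catalan's constant is a quarter of its value at `x = 1/2`.
The terms `1 / y²` are the case `n = 0` of a kernel `gₙ(y) = (2n)! n!² / ((y)_{2n+1})²`, which has
a companion `Gₙ(y)`, a rational multiple of `gₙ(y)`, with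
`gₙ(y) + gₙ₊₁(y) = Gₙ(y) + Gₙ(y + 1)`.
Put `Sₙ = ∑ₖ (-1)ᵏ gₙ(x + k)`. The alternating sum of the identity over `y = x + k` telescopes on
the right to `Sₙ + Sₙ₊₁ = Gₙ(x)`, and the alternating sum of that over `n` telescopes on the left
to `S₀ = ∑ₙ (-1)ⁿ Gₙ(x)`. The kernel decays like `2⁻ⁿ / y²`, which gives all the convergence.
-/

/-- Catalan's constant `G = ∑_{n ≥ 0} (-1)^n / (2n+1)²`. -/
noncomputable def catalanConst : ℝ := ∑' n : ℕ, (-1 : ℝ) ^ n / (2 * (n : ℝ) + 1) ^ 2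

open Polynomial
open scoped Nat

section Telescoping

theorem hasSum_sub_succ {E : Type*} [AddCommGroup E] [TopologicalSpace E]
    [IsTopologicalAddGroup E] {f : ℕ → E} (hf : Summable f) :
    HasSum (fun n ↦ f n - f (n + 1)) (f 0) := by
  simpa using hf.hasSum.sub ((hasSum_nat_add_iff' 1).2 hf.hasSum)

theorem hasSum_of_wilfZeilberger {E : Type*} [AddCommGroup E] [UniformSpace E]
    [IsUniformAddGroup E] [CompleteSpace E] [T2Space E] {F W : ℕ → ℕ → E}
    (hF : Summable fun p : ℕ × ℕ ↦ F p.1 p.2) (hW : ∀ n, Summable (W n))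
    (hFW : ∀ n k, F n k - F (n + 1) k = W n k - W n (k + 1)) :
    HasSum (fun n ↦ W n 0) (∑' k, F 0 k) := by
  have row_sub_succ (n : ℕ) : ∑' k, F n k - ∑' k, F (n + 1) k = W n 0 := by
    rw [← (hF.prod_factor n).tsum_sub (hF.prod_factor (n + 1))]
    simp only [hFW]
    exact (hasSum_sub_succ (hW n)).tsum_eq
  simpa only [row_sub_succ] using hasSum_sub_succ hF.prod

end Telescoping

section Pochhammer

theorem factorial_two_mul (n : ℕ) : (2 * n)! = n.centralBinom * n ! ^ 2 := by
  rw [Nat.centralBinom_eq_two_mul_choose, two_mul, sq, ← mul_assoc,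
    Nat.add_choose_mul_factorial_mul_factorial]

theorem ascPochhammer_succ_eval_left {S : Type*} [CommSemiring S] (n : ℕ) (y : S) :
    (ascPochhammer S (n + 1)).eval y = y * (ascPochhammer S n).eval (y + 1) := by
  simp [ascPochhammer_succ_left, eval_comp]

theorem four_pow_mul_ascPochhammer_eval_half {K : Type*} [Field K] [CharZero K] (n : ℕ) :
    4 ^ n * (ascPochhammer K n).eval (1 / 2) = n ! * n.centralBinom := by
  induction n with
  | zero => simp
  | succ n ih =>
    have central_succ : ((n : K) + 1) * (n + 1).centralBinom
        = 2 * (2 * n + 1) * n.centralBinom := by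
      exact_mod_cast n.succ_mul_centralBinom_succ
    rw [ascPochhammer_succ_eval, Nat.factorial_succ]
    push_cast
    linear_combination (4 * (1 / 2 + n : K)) * ih - (n ! : K) * central_succ

end Pochhammer

/-- The kernel `gₙ(y) = (2n)! n!² / ((y)_{2n+1})²` of the Wilf–Zeilberger pair; `g₀(y) = 1 / y²`. -/
noncomputable def lupasKernel (n : ℕ) (y : ℝ) : ℝ :=
  (2 * n)! * n ! ^ 2 / (ascPochhammer ℝ (2 * n + 1)).eval y ^ 2

/-- The companion of `lupasKernel` in its Wilf–Zeilberger pair. The factor quadratic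
in `y` is the numerator of the certificate `Gₙ(y) / gₙ(y)`. -/
noncomputable def lupasCompanion (n : ℕ) (y : ℝ) : ℝ :=
  (2 * n)! * n ! ^ 2 * ((y ^ 2 + 3 * (2 * n + 1) * y + (2 * n + 1) * (5 * n + 3)) / 2) /
    (ascPochhammer ℝ (2 * n + 2)).eval y ^ 2

section Kernel

variable (n : ℕ) {x y : ℝ}

theorem lupasKernel_zero (y : ℝ) : lupasKernel 0 y = 1 / y ^ 2 := by
  simp [lupasKernel]

theorem lupasKernel_succ (y : ℝ) :
    lupasKernel (n + 1) y = lupasKernel n y *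
      ((2 * n + 1) * (2 * n + 2) * (n + 1) ^ 2 / ((y + (2 * n + 1)) * (y + (2 * n + 2))) ^ 2) := by
  simp only [lupasKernel, mul_add_one, Nat.factorial_succ, ascPochhammer_succ_eval]
  push_cast
  rw [div_mul_div_comm]
  ring_nf

theorem lupasCompanion_eq_lupasKernel_mul (y : ℝ) :
    lupasCompanion n y = lupasKernel n y *
      ((y ^ 2 + 3 * (2 * n + 1) * y + (2 * n + 1) * (5 * n + 3)) / 2 /
        (y + (2 * n + 1)) ^ 2) := by
  simp only [lupasKernel, lupasCompanion, ascPochhammer_succ_eval _ y]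
  push_cast
  rw [div_mul_div_comm, mul_pow]

theorem lupasCompanion_add_one (hy : y ≠ 0) :
    lupasCompanion n (y + 1) = lupasKernel n y *
      (y ^ 2 * (((y + 1) ^ 2 + 3 * (2 * n + 1) * (y + 1) + (2 * n + 1) * (5 * n + 3)) / 2) /
        ((y + (2 * n + 1)) * (y + (2 * n + 2))) ^ 2) := by
  have shift : (ascPochhammer ℝ (2 * n + 2)).eval (y + 1) =
      (ascPochhammer ℝ (2 * n + 1)).eval y * ((y + (2 * n + 1)) * (y + (2 * n + 2))) / y := by
    rw [eq_div_iff hy, mul_comm, ← ascPochhammer_succ_eval_left, ascPochhammer_succ_eval,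
      ascPochhammer_succ_eval]
    push_cast
    ring
  rw [lupasKernel, lupasCompanion, shift, div_mul_div_comm, div_pow, div_div_eq_mul_div]
  ring

theorem lupasKernel_add_lupasKernel_succ (hy : 0 < y) :
    lupasKernel n y + lupasKernel (n + 1) y = lupasCompanion n y + lupasCompanion n (y + 1) := by
  rw [lupasKernel_succ, lupasCompanion_eq_lupasKernel_mul, lupasCompanion_add_one n hy.ne']
  field_simp
  ring

theorem lupasKernel_nonneg (y : ℝ) : 0 ≤ lupasKernel n y := by
  unfold lupasKernel; positivity

theorem lupasKernel_succ_le (hy : 0 ≤ y) :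
    lupasKernel (n + 1) y ≤ lupasKernel n y * (1 / 2) := by
  rw [lupasKernel_succ]
  refine mul_le_mul_of_nonneg_left ?_ (lupasKernel_nonneg n y)
  rw [div_le_div_iff₀ (by positivity) two_pos, one_mul]
  have le_shift (a : ℝ) : a ≤ y + a := le_add_of_nonneg_left hy
  calc (2 * n + 1) * (2 * n + 2) * (n + 1) ^ 2 * 2
      ≤ ((2 * n + 1) * (2 * n + 2) : ℝ) ^ 2 := by
        have : (0 : ℝ) ≤ (2 * n + 1) * (2 * n + 2) * (2 * n * (n + 1)) := by positivity
        linarith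
    _ ≤ ((y + (2 * n + 1)) * (y + (2 * n + 2))) ^ 2 :=
        pow_le_pow_left₀ (by positivity)
          (mul_le_mul (le_shift _) (le_shift _) (by positivity) (by positivity)) 2

theorem lupasKernel_le (hy : 0 ≤ y) : lupasKernel n y ≤ (1 / 2) ^ n * (1 / y ^ 2) := by
  induction n with
  | zero => simp [lupasKernel_zero]
  | succ n ih =>
    calc lupasKernel (n + 1) y
        ≤ lupasKernel n y * (1 / 2) := lupasKernel_succ_le n hy
      _ ≤ (1 / 2) ^ n * (1 / y ^ 2) * (1 / 2) := by gcongr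
      _ = (1 / 2) ^ (n + 1) * (1 / y ^ 2) := by ring

theorem lupasCompanion_nonneg (hy : 0 ≤ y) : 0 ≤ lupasCompanion n y := by
  unfold lupasCompanion; positivity

theorem lupasCompanion_le (hy : 0 ≤ y) : lupasCompanion n y ≤ lupasKernel n y * 2 := by
  rw [lupasCompanion_eq_lupasKernel_mul]
  refine mul_le_mul_of_nonneg_left ?_ (lupasKernel_nonneg n y)
  rw [div_le_iff₀ (by positivity)]
  nlinarith [mul_nonneg n.cast_nonneg hy]

theorem summable_one_div_add_nat_sq (x : ℝ) : Summable fun k : ℕ ↦ 1 / (x + k) ^ 2 := by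
  simpa [add_comm x] using (Real.summable_one_div_nat_add_rpow x 2).2 one_lt_two

theorem summable_lupasKernel (hx : 0 ≤ x) :
    Summable fun p : ℕ × ℕ ↦ lupasKernel p.1 (x + p.2) :=
  (summable_geometric_two.mul_of_nonneg (summable_one_div_add_nat_sq x)
    (fun _ ↦ by positivity) fun _ ↦ by positivity).of_nonneg_of_le
      (fun _ ↦ lupasKernel_nonneg _ _) fun _ ↦ lupasKernel_le _ (by positivity)

theorem summable_lupasCompanion (hx : 0 ≤ x) :
    Summable fun k : ℕ ↦ lupasCompanion n (x + k) :=
  (((summable_lupasKernel hx).prod_factor n).mul_right 2).of_nonneg_of_le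
    (fun _ ↦ lupasCompanion_nonneg n (by positivity))
    fun _ ↦ lupasCompanion_le n (by positivity)

theorem hasSum_lupasCompanion (hx : 0 < x) :
    HasSum (fun n : ℕ ↦ (-1) ^ n * lupasCompanion n x)
      (∑' k : ℕ, (-1) ^ k / (x + k) ^ 2) := by
  have kernel_summable :
      Summable fun p : ℕ × ℕ ↦ (-1) ^ (p.1 + p.2) * lupasKernel p.1 (x + p.2) :=
    (summable_lupasKernel hx.le).of_norm_bounded fun p ↦ by
      simp [abs_of_nonneg (lupasKernel_nonneg _ _)]
  have companion_summable (n : ℕ) :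
      Summable fun k : ℕ ↦ (-1) ^ (n + k) * lupasCompanion n (x + k) :=
    (summable_lupasCompanion n hx.le).of_norm_bounded fun k ↦ by
      simp [abs_of_nonneg (lupasCompanion_nonneg n (by positivity : 0 ≤ x + k))]
  have pair (n k : ℕ) :
      (-1) ^ (n + k) * lupasKernel n (x + k) - (-1) ^ (n + 1 + k) * lupasKernel (n + 1) (x + k) =
        (-1) ^ (n + k) * lupasCompanion n (x + k) -
          (-1) ^ (n + (k + 1)) * lupasCompanion n (x + (k + 1 : ℕ)) := by
    rw [Nat.cast_add_one, ← add_assoc x]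
    linear_combination
      (-1) ^ (n + k) * lupasKernel_add_lupasKernel_succ n (by positivity : 0 < x + k)
  simpa [lupasKernel_zero, div_eq_mul_inv] using
    hasSum_of_wilfZeilberger kernel_summable companion_summable pair

end Kernel

section Catalan

theorem tsum_neg_one_pow_div_half_add_sq :
    ∑' k : ℕ, (-1 : ℝ) ^ k / (1 / 2 + k) ^ 2 = 4 * catalanConst := by
  rw [catalanConst, ← tsum_mul_left]
  congr with k
  field_simp
  ring

theorem sixteen_mul_lupasCompanion_half (n : ℕ) :
    16 * lupasCompanion n (1 / 2) =
      256 ^ (n + 1) * (40 * ((n : ℝ) + 1) ^ 2 - 24 * ((n : ℝ) + 1) + 3) /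
        ((2 * (n + 1)).centralBinom ^ 2 * (n + 1).centralBinom * ((n : ℝ) + 1) ^ 3 *
          (2 * ((n : ℝ) + 1) - 1)) := by
  have pochhammer : (ascPochhammer ℝ (2 * n + 2)).eval (1 / 2) =
      (2 * (n + 1))! * (2 * (n + 1)).centralBinom / 4 ^ (2 * (n + 1)) := by
    rw [eq_div_iff (by positivity), mul_comm, ← four_pow_mul_ascPochhammer_eval_half, mul_add_one]
  have factorial_eq : ((2 * (n + 1))! : ℝ) = (2 * n + 2) * ((2 * n + 1) * (2 * n)!) := by
    simp only [mul_add_one, Nat.factorial_succ]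
    push_cast
    ring
  have factorial_sq : ((2 * (n + 1))! : ℝ) ^ 2 =
      (n + 1).centralBinom * ((n + 1) * n !) ^ 2 * ((2 * n + 2) * ((2 * n + 1) * (2 * n)!)) := by
    rw [← factorial_eq, sq]
    congr 1
    exact_mod_cast factorial_two_mul (n + 1)
  have two_fifty_six_pow : (256 : ℝ) ^ (n + 1) = (4 ^ (2 * (n + 1))) ^ 2 := by
    rw [← pow_mul, mul_right_comm, pow_mul]
    norm_num
  have central_ne := (n + 1).centralBinom_ne_zero
  have central_two_ne := (2 * (n + 1)).centralBinom_ne_zero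
  rw [lupasCompanion, pochhammer, div_pow _ (4 ^ _), mul_pow, factorial_sq, two_fifty_six_pow,
    show 2 * ((n : ℝ) + 1) - 1 = 2 * n + 1 by ring]
  field_simp
  ring

end Catalan

theorem stmt7 :
    catalanConst = (1 / 64) * ∑' n : ℕ,
      (-1 : ℝ) ^ n * 256 ^ (n + 1) * (40 * ((n : ℝ) + 1) ^ 2 - 24 * ((n : ℝ) + 1) + 3) /
        ((Nat.choose (4 * (n + 1)) (2 * (n + 1)) : ℝ) ^ 2 *
          (Nat.choose (2 * (n + 1)) (n + 1) : ℝ) * ((n : ℝ) + 1) ^ 3 *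
          (2 * ((n : ℝ) + 1) - 1)) := by
  have central (n : ℕ) : (4 * (n + 1)).choose (2 * (n + 1)) = (2 * (n + 1)).centralBinom := by
    rw [Nat.centralBinom_eq_two_mul_choose]
    congr 1
    ring
  have companion_sum :
      ∑' n : ℕ, (-1) ^ n * lupasCompanion n (1 / 2) = 4 * catalanConst := by
    rw [(hasSum_lupasCompanion one_half_pos).tsum_eq, tsum_neg_one_pow_div_half_add_sq]
  calc catalanConst = 1 / 64 * ∑' n : ℕ, 16 * ((-1) ^ n * lupasCompanion n (1 / 2)) := by
        rw [tsum_mul_left, companion_sum]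
        ring
    _ = _ := by
        simp only [mul_left_comm (16 : ℝ), sixteen_mul_lupasCompanion_half, central,
          ← Nat.centralBinom_eq_two_mul_choose, mul_assoc, mul_div_assoc]
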